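/- Let I ⊆ S = K[x_1,…,x_n] be a monomial ideal with |G(I)| = m, where m is odd. If there exists a prime ideal P ∈ Ass(S/I) with height(P) ≥ m − 1, then sdepth_S(I) = n − ⌊m/2⌋. -/

import Mathlib

open MvPolynomial

/-- The Stanley space `u·K[Z]` inside the polynomial ring `K[x_i : i ∈ σ]`:
the `K`-span of all monomials `x^(u+v)` with `supp v ⊆ Z`. -/
noncomputable def stanleySpace (K : Type*) [Field K] {σ : Type*} (u : σ →₀ ℕ) (Z : Set σ) :
    Submodule K (MvPolynomial σ K) :=
  Submodule.span K
    ((fun v : σ →₀ ℕ => (monomial (u + v) (1 : K) : MvPolynomial σ K)) ''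
      {v | (v.support : Set σ) ⊆ Z})

/-- `(u, Z)` (indexed by a finite type `ι`) is a Stanley decomposition of the monomial
ideal `I`: the Stanley spaces `x^(u i)·K[Z i]` are independent and their (direct) sum is `I`
as a `K`-vector space.  (Inside the polynomial ring each Stanley space is automatically a
free `K[Z]`-module.) -/
def IsStanleyDecompOfIdeal {K σ : Type*} [Field K] {ι : Type} [Fintype ι]
    (I : Ideal (MvPolynomial σ K)) (u : ι → (σ →₀ ℕ)) (Z : ι → Finset σ) : Prop :=
  iSupIndep (fun i => stanleySpace K (u i) (Z i)) ∧
    (⨆ i, stanleySpace K (u i) (Z i)) = Submodule.restrictScalars K I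

/-- The Stanley depth of a monomial ideal `I`: the largest `d` such that there is a Stanley
decomposition of `I` all of whose Stanley spaces `u_i K[Z_i]` satisfy `|Z_i| ≥ d`. -/
noncomputable def sdepthIdeal {K σ : Type*} [Field K] (I : Ideal (MvPolynomial σ K)) : ℕ :=
  sSup {d | ∃ (ι : Type) (_ : Fintype ι) (_ : Nonempty ι) (u : ι → (σ →₀ ℕ))
    (Z : ι → Finset σ), IsStanleyDecompOfIdeal I u Z ∧ ∀ i, d ≤ (Z i).card}

/-- `(u, Z)` is a Stanley decomposition of `S/I`:  each Stanley space `x^(u i)·K[Z i]` meets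
`I` trivially (equivalently, its image in `S/I` is a free `K[Z i]`-module), the images of the
Stanley spaces in `S/I` are independent, and they sum to `S/I`. -/
def IsStanleyDecompOfQuotient {K σ : Type*} [Field K] {ι : Type} [Fintype ι]
    (I : Ideal (MvPolynomial σ K)) (u : ι → (σ →₀ ℕ)) (Z : ι → Finset σ) : Prop :=
  (∀ i, Disjoint (stanleySpace K (u i) (Z i)) (Submodule.restrictScalars K I)) ∧
    iSupIndep (fun i =>
      (stanleySpace K (u i) (Z i)).map (Ideal.Quotient.mkₐ K I).toLinearMap) ∧
    (⨆ i, (stanleySpace K (u i) (Z i)).map (Ideal.Quotient.mkₐ K I).toLinearMap) = ⊤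

/-- The Stanley depth of `S/I` for a monomial ideal `I`. -/
noncomputable def sdepthQuot {K σ : Type*} [Field K] (I : Ideal (MvPolynomial σ K)) : ℕ :=
  sSup {d | ∃ (ι : Type) (_ : Fintype ι) (_ : Nonempty ι) (u : ι → (σ →₀ ℕ))
    (Z : ι → Finset σ), IsStanleyDecompOfQuotient I u Z ∧ ∀ i, d ≤ (Z i).card}

/-- A monomial ideal: an ideal generated by monomials. -/
def IsMonomialIdeal {K σ : Type*} [Field K] (I : Ideal (MvPolynomial σ K)) : Prop :=
  ∃ A : Set (σ →₀ ℕ), I = Ideal.span ((fun a => (monomial a (1 : K) : MvPolynomial σ K)) '' A)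

/-- The (exponents of the) minimal monomial generators of a monomial ideal `I`:
monomials in `I` that are not proper multiples of monomials in `I`. -/
def minimalGenerators {K σ : Type*} [Field K] (I : Ideal (MvPolynomial σ K)) :
    Set (σ →₀ ℕ) :=
  {a | (monomial a (1 : K) : MvPolynomial σ K) ∈ I ∧
    ∀ b < a, (monomial b (1 : K) : MvPolynomial σ K) ∉ I}

/-- The depth (w.r.t. the maximal graded ideal `m = (x_1,…,x_n)`) of a module `M` over the
polynomial ring: the maximal length of a regular sequence on `M` consisting of elements
of `m`. -/
noncomputable def mdepth (K σ : Type*) [Field K] (M : Type*) [AddCommGroup M]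
    [Module (MvPolynomial σ K) M] : ℕ :=
  sSup {k | ∃ rs : List (MvPolynomial σ K), rs.length = k ∧
    (∀ r ∈ rs, r ∈ Ideal.span (Set.range (X : σ → MvPolynomial σ K))) ∧
    RingTheory.Sequence.IsRegular M rs}

/-- The height of a prime ideal: the height of the corresponding point
of the prime spectrum, i.e. the supremum of lengths of chains of primes below it. -/
noncomputable def primeHt {R : Type*} [CommRing R] (P : Ideal R) (hP : P.IsPrime) : ℕ∞ :=
  Order.height (⟨P, hP⟩ : PrimeSpectrum R)

/-! ### Stanley sets of exponents -/

/-- The exponents of the monomials in the Stanley space `x^u K[Z]`. -/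
def stSet {σ : Type*} (u : σ →₀ ℕ) (Z : Finset σ) : Set (σ →₀ ℕ) :=
  {w | u ≤ w ∧ ∀ i, i ∉ Z → w i = u i}

theorem stanleySpace_eq (K : Type*) [Field K] {σ : Type*} (u : σ →₀ ℕ) (Z : Finset σ) :
    stanleySpace K u (Z : Set σ) = restrictSupport K (stSet u Z) := by
  classical
  rw [restrictSupport_eq_span, stanleySpace]
  congr 1
  ext p
  constructor
  · rintro ⟨v, hv, rfl⟩
    refine ⟨u + v, ⟨le_self_add, fun i hi => ?_⟩, rfl⟩
    have : v i = 0 := by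
      by_contra h
      exact hi (hv (by simpa using h))
    simp [this]
  · rintro ⟨w, ⟨h1, h2⟩, rfl⟩
    obtain ⟨v, rfl⟩ := exists_add_of_le h1
    refine ⟨v, fun i hi => ?_, rfl⟩
    by_contra h
    have := h2 i h
    simp at this hi
    exact hi this

theorem iSup_restrictSupport (K : Type*) [Field K] {σ ι : Type*} (s : ι → Set (σ →₀ ℕ)) :
    (⨆ i, restrictSupport K (s i)) = restrictSupport K (⋃ i, s i) := by
  simp only [restrictSupport_eq_span, Set.image_iUnion, Submodule.span_iUnion]

theorem iSupIndep_restrictSupport (K : Type*) [Field K] {σ ι : Type*} (s : ι → Set (σ →₀ ℕ)) :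
    iSupIndep (fun i => restrictSupport K (s i)) ↔
      ∀ i j, ∀ w, w ∈ s i → w ∈ s j → i = j := by
  constructor
  · intro h i j w hi hj
    by_contra hij
    have hd := h.pairwiseDisjoint hij
    have h0 := Submodule.disjoint_def.mp hd (monomial w (1 : K))
      (by simp [hi]) (by simp [hj])
    simp at h0
  · intro h i
    rw [Submodule.disjoint_def]
    intro p hp hp'
    have h2 : p ∈ restrictSupport K (⋃ j, ⋃ (_ : j ≠ i), s j) := by
      have h3 : (⨆ j, ⨆ (_ : j ≠ i), restrictSupport K (s j)) ≤
          restrictSupport K (⋃ j, ⋃ (_ : j ≠ i), s j) := by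
        refine iSup₂_le fun j hj => restrictSupport_mono _ ?_
        exact Set.subset_iUnion₂ (s := fun j (_ : j ≠ i) => s j) j hj
      exact h3 hp'
    rw [mem_restrictSupport_iff] at hp h2
    rw [← support_eq_empty, Finset.eq_empty_iff_forall_notMem]
    intro w hw
    have h3 := h2 hw
    simp only [Set.mem_iUnion] at h3
    obtain ⟨j, hj, hjw⟩ := h3
    exact hj (h j i w hjw (hp hw))

theorem mem_iff_of_monomial {K σ : Type*} [Field K] {I : Ideal (MvPolynomial σ K)}
    (hI : IsMonomialIdeal I) (p : MvPolynomial σ K) :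
    p ∈ I ↔ ∀ w ∈ p.support, monomial w (1 : K) ∈ I := by
  classical
  obtain ⟨A, rfl⟩ := hI
  simp only [mem_ideal_span_monomial_image, support_monomial]
  simp

theorem monomial_mem_of_le {K σ : Type*} [Field K] {I : Ideal (MvPolynomial σ K)}
    {a b : σ →₀ ℕ} (h : a ≤ b) (ha : monomial a (1 : K) ∈ I) : monomial b (1 : K) ∈ I := by
  obtain ⟨c, rfl⟩ := exists_add_of_le h
  have := I.mul_mem_right (monomial c (1 : K)) ha
  simpa [monomial_mul] using this

theorem restrictScalars_eq {K σ : Type*} [Field K] {I : Ideal (MvPolynomial σ K)}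
    (hI : IsMonomialIdeal I) :
    Submodule.restrictScalars K I = restrictSupport K {w | monomial w (1 : K) ∈ I} := by
  ext p
  rw [Submodule.restrictScalars_mem, mem_iff_of_monomial hI, mem_restrictSupport_iff]
  rfl

theorem restrictSupport_inj (K : Type*) [Field K] {σ : Type*} {s t : Set (σ →₀ ℕ)} :
    restrictSupport K s = restrictSupport K t ↔ s = t := by
  constructor
  · intro h
    ext w
    have := congrArg (fun V : Submodule K (MvPolynomial σ K) => monomial w (1 : K) ∈ V) h
    simpa using this
  · rintro rfl; rfl

theorem isStanleyDecomp_iff {K σ : Type*} [Field K] {ι : Type} [Fintype ι]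
    {I : Ideal (MvPolynomial σ K)} (hI : IsMonomialIdeal I)
    (u : ι → (σ →₀ ℕ)) (Z : ι → Finset σ) :
    IsStanleyDecompOfIdeal I u Z ↔
      (∀ i j, ∀ w, w ∈ stSet (u i) (Z i) → w ∈ stSet (u j) (Z j) → i = j) ∧
      ∀ w, (∃ i, w ∈ stSet (u i) (Z i)) ↔ monomial w (1 : K) ∈ I := by
  unfold IsStanleyDecompOfIdeal
  simp only [stanleySpace_eq]
  rw [iSupIndep_restrictSupport, iSup_restrictSupport, restrictScalars_eq hI, restrictSupport_inj,
    Set.ext_iff]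
  simp

/-! ### Decomposable sets -/

/-- `W` is a finite disjoint union of Stanley sets of dimension at least `d`. -/
def Dec {σ : Type*} (d : ℕ) (W : Set (σ →₀ ℕ)) : Prop :=
  ∃ T : Finset ((σ →₀ ℕ) × Finset σ), (∀ t ∈ T, d ≤ t.2.card) ∧
    (∀ t ∈ T, ∀ t' ∈ T, ∀ w, w ∈ stSet t.1 t.2 → w ∈ stSet t'.1 t'.2 → t = t') ∧
    ∀ w, w ∈ W ↔ ∃ t ∈ T, w ∈ stSet t.1 t.2

theorem Dec.empty {σ : Type*} (d : ℕ) : Dec d (∅ : Set (σ →₀ ℕ)) :=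
  ⟨∅, by simp, by simp, by simp⟩

theorem Dec.stSet {σ : Type*} {d : ℕ} (u : σ →₀ ℕ) (Z : Finset σ) (h : d ≤ Z.card) :
    Dec d (stSet u Z) :=
  ⟨{(u, Z)}, by simpa using h, by simp, by simp⟩

theorem Dec.mono {σ : Type*} {d e : ℕ} {W : Set (σ →₀ ℕ)} (h : Dec d W) (hde : e ≤ d) :
    Dec e W := by
  obtain ⟨T, h1, h2⟩ := h
  exact ⟨T, fun t ht => hde.trans (h1 t ht), h2⟩

theorem Dec.biUnion {σ ι : Type*} {d : ℕ} (s : Finset ι) (V : ι → Set (σ →₀ ℕ))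
    (hV : ∀ i ∈ s, Dec d (V i))
    (hdisj : ∀ i ∈ s, ∀ j ∈ s, ∀ w, w ∈ V i → w ∈ V j → i = j)
    (W : Set (σ →₀ ℕ)) (hW : ∀ w, w ∈ W ↔ ∃ i ∈ s, w ∈ V i) : Dec d W := by
  classical
  choose! T h1 h2 h3 using hV
  refine ⟨s.biUnion T, ?_, ?_, ?_⟩
  · intro t ht
    obtain ⟨i, hi, hit⟩ := Finset.mem_biUnion.mp ht
    exact h1 i hi t hit
  · intro t ht t' ht' w hw hw'
    obtain ⟨i, hi, hit⟩ := Finset.mem_biUnion.mp ht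
    obtain ⟨j, hj, hjt⟩ := Finset.mem_biUnion.mp ht'
    obtain rfl := hdisj i hi j hj w ((h3 i hi w).2 ⟨t, hit, hw⟩) ((h3 j hj w).2 ⟨t', hjt, hw'⟩)
    exact h2 i hi t hit t' hjt w hw hw'
  · intro w
    rw [hW]
    constructor
    · rintro ⟨i, hi, hw⟩
      obtain ⟨t, ht, hw⟩ := (h3 i hi w).1 hw
      exact ⟨t, Finset.mem_biUnion.mpr ⟨i, hi, ht⟩, hw⟩
    · rintro ⟨t, ht, hw⟩
      obtain ⟨i, hi, hit⟩ := Finset.mem_biUnion.mp ht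
      exact ⟨i, hi, (h3 i hi w).2 ⟨t, hit, hw⟩⟩

theorem Dec.union {σ : Type*} {d : ℕ} {V₁ V₂ : Set (σ →₀ ℕ)} (h₁ : Dec d V₁) (h₂ : Dec d V₂)
    (hdisj : ∀ w, w ∈ V₁ → w ∉ V₂) : Dec d (V₁ ∪ V₂) := by
  refine Dec.biUnion (Finset.univ : Finset Bool) (fun b => if b then V₁ else V₂) ?_ ?_ _ ?_
  · intro b _; cases b <;> simpa
  · intro b _ c _ w
    cases b <;> cases c <;> simp
    · exact fun h h' => hdisj w h' h
    · exact fun h h' => hdisj w h h'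
  · intro w; simp [or_comm]

theorem Dec.stSet_diff {σ : Type*} [Fintype σ] (v : σ →₀ ℕ) (Z : Finset σ) (N : ℕ) :
    ∀ u : σ →₀ ℕ, ∑ i, (v i - u i) ≤ N →
      Dec (Z.card - 1) {w | w ∈ _root_.stSet u Z ∧ ¬ v ≤ w} := by
  classical
  induction N with
  | zero =>
    intro u hu
    have hvu : v ≤ u := by
      intro i
      have : ∑ i, (v i - u i) = 0 := by omega
      rw [Finset.sum_eq_zero_iff] at this
      have := this i (Finset.mem_univ i)
      omega
    convert Dec.empty _ using 1
    ext w
    simp only [Set.mem_ofPred_eq, Set.mem_empty_iff_false, iff_false, not_and, not_not]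
    exact fun h => hvu.trans h.1
  | succ N ih =>
    intro u hu
    by_cases hvu : v ≤ u
    · convert Dec.empty _ using 1
      ext w
      simp only [Set.mem_ofPred_eq, Set.mem_empty_iff_false, iff_false, not_and, not_not]
      exact fun h => hvu.trans h.1
    have hex : ∃ i, u i < v i := by
      by_contra h
      push Not at h
      exact hvu h
    obtain ⟨i, hi⟩ := hex
    by_cases hiZ : i ∈ Z
    · have hle : ∑ j, (v j - (u + Finsupp.single i 1 : σ →₀ ℕ) j) ≤ N := by
        have : ∑ j, (v j - (u + Finsupp.single i 1 : σ →₀ ℕ) j) < ∑ j, (v j - u j) := by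
          refine Finset.sum_lt_sum (fun j _ => ?_) ⟨i, Finset.mem_univ i, ?_⟩
          · simp only [Finsupp.add_apply]; omega
          · simp only [Finsupp.add_apply, Finsupp.single_eq_same]; omega
        omega
      have h1 := ih (u + Finsupp.single i 1) hle
      have h2 : Dec (Z.card - 1) (_root_.stSet u (Z.erase i)) :=
        Dec.stSet _ _ (by rw [Finset.card_erase_of_mem hiZ])
      convert Dec.union h2 h1 ?_ using 1
      · ext w
        simp only [Set.mem_ofPred_eq, Set.mem_union, _root_.stSet, Finset.mem_erase]
        constructor
        · rintro ⟨⟨ha, hb⟩, hc⟩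
          by_cases hwi : w i = u i
          · left
            refine ⟨ha, fun j hj => ?_⟩
            by_cases hji : j = i
            · rw [hji, hwi]
            · exact hb j (fun h => hj ⟨hji, h⟩)
          · right
            refine ⟨⟨fun j => ?_, fun j hj => ?_⟩, hc⟩
            · have := ha j
              by_cases hji : j = i
              · subst hji
                simp only [Finsupp.add_apply, Finsupp.single_eq_same]; omega
              · simpa [Finsupp.single_apply, Ne.symm hji] using this
            · have hji : j ≠ i := by rintro rfl; exact hj hiZ
              simpa [Finsupp.single_apply, hji.symm] using hb j hj
        · rintro (⟨ha, hb⟩ | ⟨⟨ha, hb⟩, hc⟩)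
          · refine ⟨⟨ha, fun j hj => hb j (fun h => hj h.2)⟩, fun hvw => ?_⟩
            have h3 := hb i (by simp)
            have h4 := hvw i
            omega
          · refine ⟨⟨le_self_add.trans ha, fun j hj => ?_⟩, hc⟩
            have hji : j ≠ i := by rintro rfl; exact hj hiZ
            simpa [Finsupp.single_apply, hji.symm] using hb j hj
      · rintro w ⟨_, hb⟩ ⟨⟨ha, _⟩, _⟩
        have h3 := hb i (by simp)
        have h4 := ha i
        simp at h4
        omega
    · convert Dec.stSet (d := Z.card - 1) u Z (by omega) using 1
      ext w
      simp only [Set.mem_ofPred_eq, and_iff_left_iff_imp]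
      intro hw hvw
      have h3 := hw.2 i hiZ
      have h4 := hvw i
      omega

theorem Dec.diff {σ : Type*} [Fintype σ] {d : ℕ} {W : Set (σ →₀ ℕ)} (h : Dec d W)
    (v : σ →₀ ℕ) : Dec (d - 1) {w | w ∈ W ∧ ¬ v ≤ w} := by
  obtain ⟨T, h1, h2, h3⟩ := h
  refine Dec.biUnion T (fun t => {w | w ∈ _root_.stSet t.1 t.2 ∧ ¬ v ≤ w}) ?_ ?_ _ ?_
  · intro t ht
    exact (Dec.stSet_diff v t.2 _ t.1 le_rfl).mono (Nat.sub_le_sub_right (h1 t ht) 1)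
  · intro t ht t' ht' w hw hw'
    exact h2 t ht t' ht' w hw.1 hw'.1
  · intro w
    simp only [Set.mem_ofPred_eq, h3]
    constructor
    · rintro ⟨⟨t, ht, hw⟩, hv⟩; exact ⟨t, ht, hw, hv⟩
    · rintro ⟨t, ht, hw, hv⟩; exact ⟨⟨t, ht, hw⟩, hv⟩

theorem Dec.diff_finset {σ ι : Type*} [Fintype σ] {d : ℕ} {W : Set (σ →₀ ℕ)} (h : Dec d W)
    (v : ι → (σ →₀ ℕ)) (J : Finset ι) :
    Dec (d - J.card) {w | w ∈ W ∧ ∀ j ∈ J, ¬ v j ≤ w} := by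
  classical
  induction J using Finset.induction_on with
  | empty => simpa using h
  | insert a J ha ih =>
    have := ih.diff (v a)
    rw [Finset.card_insert_of_notMem ha, ← Nat.sub_sub]
    convert this using 1
    ext w
    simp only [Set.mem_ofPred_eq, Finset.mem_insert, forall_eq_or_imp]
    tauto

/-! ### The cyclic parsing -/

theorem exists_parse {m : ℕ} [NeZero m] (X : ZMod m → Prop) (x₀ : ZMod m) (hx₀ : X x₀) :
    ∃ Q : Finset (ZMod m), ∀ i, (i + 1 ∈ Q ↔ i ∉ Q ∧ ¬ X i) := by
  classical
  obtain ⟨r, r0, rs⟩ : ∃ r : ℕ → Prop, ¬ r 0 ∧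
      ∀ j, (r (j + 1) ↔ ¬ r j ∧ ¬ X (x₀ + 1 + (j : ZMod m))) :=
    ⟨fun j => Nat.rec (motive := fun _ => Prop) False
      (fun j b => ¬ b ∧ ¬ X (x₀ + 1 + (j : ZMod m))) j, id, fun j => Iff.rfl⟩
  obtain ⟨Q, hQ⟩ : ∃ Q : Finset (ZMod m), ∀ i, i ∈ Q ↔ r (i - (x₀ + 1)).val :=
    ⟨(Set.toFinite {i : ZMod m | r (i - (x₀ + 1)).val}).toFinset, by simp⟩
  refine ⟨Q, fun i => ?_⟩
  rw [hQ, hQ]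
  set y := i - (x₀ + 1) with hy
  have hi : i = x₀ + 1 + y := by rw [hy]; ring
  have hi1 : i + 1 - (x₀ + 1) = y + 1 := by rw [hy]; ring
  rw [hi1]
  have hyv : ((y.val : ℕ) : ZMod m) = y := ZMod.natCast_zmod_val y
  by_cases h : y.val + 1 < m
  · have : (y + 1).val = y.val + 1 := by
      have h1 : y + 1 = ((y.val + 1 : ℕ) : ZMod m) := by push_cast; rw [hyv]
      rw [h1, ZMod.val_natCast, Nat.mod_eq_of_lt h]
    rw [this, rs, hyv, ← hi]
  · have hlt := ZMod.val_lt y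
    have h2 : y.val + 1 = m := by omega
    have h3 : y + 1 = 0 := by
      have h1 : y + 1 = ((y.val + 1 : ℕ) : ZMod m) := by push_cast; rw [hyv]
      rw [h1, h2, ZMod.natCast_self]
    have h4 : i = x₀ := by
      rw [hi, add_assoc, add_comm 1 y, h3, add_zero]
    rw [h3, ZMod.val_zero, h4]
    exact iff_of_false r0 (fun h => h.2 hx₀)

theorem parse_unique {m : ℕ} [NeZero m] (X : ZMod m → Prop) (x₀ : ZMod m) (hx₀ : X x₀)
    (Q Q' : Finset (ZMod m)) (hQ : ∀ i, (i + 1 ∈ Q ↔ i ∉ Q ∧ ¬ X i))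
    (hQ' : ∀ i, (i + 1 ∈ Q' ↔ i ∉ Q' ∧ ¬ X i)) : Q = Q' := by
  have key : ∀ j : ℕ, (x₀ + 1 + (j : ZMod m) ∈ Q ↔ x₀ + 1 + (j : ZMod m) ∈ Q') := by
    intro j
    induction j with
    | zero => simp [hQ, hQ', hx₀]
    | succ j ih =>
      push_cast
      rw [← add_assoc, hQ, hQ', ih]
  ext i
  have := key (i - (x₀ + 1)).val
  rw [ZMod.natCast_zmod_val] at this
  simpa using this

/-- The lower bound. -/
theorem Dec.of_gens {σ : Type*} [Fintype σ] {m : ℕ} [NeZero m] (hm : Odd m)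
    (g : ZMod m → (σ →₀ ℕ)) :
    Dec (Fintype.card σ - m / 2) {w | ∃ i, g i ≤ w} := by
  classical
  refine Dec.biUnion (Finset.univ : Finset (Finset (ZMod m)))
    (fun Q => {w | (∃ i, g i ≤ w) ∧ ∀ i, (i + 1 ∈ Q ↔ i ∉ Q ∧ ¬ g i ≤ w)}) ?_ ?_ _ ?_
  · intro Q _
    by_cases hind : ∀ i, i + 1 ∈ Q → i ∉ Q
    · set R : Finset (ZMod m) := Finset.univ.filter (fun i => i + 1 ∈ Q) with hR
      have hRQ : R.card = Q.card := by
        refine Finset.card_bij (fun i _ => i + 1) ?_ ?_ ?_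
        · intro i hi; simpa [hR] using hi
        · intro i _ j _ h; simpa using h
        · intro j hj; exact ⟨j - 1, by simpa [hR] using hj, by simp⟩
      have hdis : Disjoint R Q := by
        rw [Finset.disjoint_left]
        intro i hi
        exact hind i (by simpa [hR] using hi)
      have hcard : R.card ≤ m / 2 := by
        have h1 : (R ∪ Q).card ≤ m := by
          simpa [ZMod.card] using Finset.card_le_univ (R ∪ Q)
        rw [Finset.card_union_of_disjoint hdis] at h1
        omega
      have hne : ∃ i : ZMod m, i ∉ Q ∧ i + 1 ∉ Q := by
        by_contra hne
        push Not at hne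
        have h1 : R ∪ Q = Finset.univ := by
          ext i
          have := hne i
          simp only [hR, Finset.mem_union, Finset.mem_filter, Finset.mem_univ, true_and, iff_true]
          tauto
        have h2 := congrArg Finset.card h1
        rw [Finset.card_union_of_disjoint hdis, Finset.card_univ, ZMod.card, hRQ] at h2
        rw [← h2] at hm
        exact (Nat.not_odd_iff_even.mpr ⟨_, rfl⟩) hm
      set C : Finset (ZMod m) := Finset.univ.filter (fun i => i ∉ Q ∧ i + 1 ∉ Q) with hC
      have h1 : Dec (Fintype.card σ) (_root_.stSet (C.sup g) Finset.univ) :=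
        Dec.stSet _ _ (by simp)
      have h2 := (h1.diff_finset g R).mono (Nat.sub_le_sub_left hcard _)
      convert h2 using 1
      ext w
      simp only [Set.mem_ofPred_eq, _root_.stSet, Finset.sup_le_iff, Finset.mem_univ,
        not_true_eq_false, false_imp_iff, implies_true, and_true, hC, hR, Finset.mem_filter,
        true_and]
      constructor
      · rintro ⟨-, h⟩
        refine ⟨fun i hi => ?_, fun i hi => ((h i).1 hi).2⟩
        by_contra hgi
        exact hi.2 ((h i).2 ⟨hi.1, hgi⟩)
      · rintro ⟨ha, hb⟩
        obtain ⟨i, hi⟩ := hne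
        refine ⟨⟨i, ha i hi⟩, fun j => ⟨fun hj => ⟨hind j hj, hb j hj⟩, fun hj => ?_⟩⟩
        by_contra hj'
        exact hj.2 (ha j ⟨hj.1, hj'⟩)
    · convert Dec.empty _ using 1
      ext w
      simp only [Set.mem_ofPred_eq, Set.mem_empty_iff_false, iff_false]
      rintro ⟨-, h⟩
      exact hind (fun i hi => ((h i).1 hi).1)
  · rintro Q - Q' - w ⟨⟨i, hi⟩, h⟩ ⟨_, h'⟩
    exact parse_unique (fun i => g i ≤ w) i hi Q Q' h h'
  · intro w
    simp only [Set.mem_ofPred_eq, Finset.mem_univ, true_and]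
    constructor
    · rintro ⟨i, hi⟩
      obtain ⟨Q, hQ⟩ := exists_parse (fun i => g i ≤ w) i hi
      exact ⟨Q, ⟨i, hi⟩, hQ⟩
    · rintro ⟨Q, h, -⟩; exact h

/-! ### Generators -/

theorem exists_minimalGenerator_le {K : Type*} [Field K] {n : ℕ}
    (I : Ideal (MvPolynomial (Fin n) K)) (w : Fin n →₀ ℕ) :
    (∃ a ∈ minimalGenerators I, a ≤ w) ↔ monomial w (1 : K) ∈ I := by
  constructor
  · rintro ⟨a, ha, haw⟩
    exact monomial_mem_of_le haw ha.1
  · intro hw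
    induction w using WellFoundedLT.induction with
    | _ w ih =>
      by_cases h : ∃ b < w, monomial b (1 : K) ∈ I
      · obtain ⟨b, hb, hbI⟩ := h
        obtain ⟨a, ha, hab⟩ := ih b hb hbI
        exact ⟨a, ha, hab.trans hb.le⟩
      · push Not at h
        exact ⟨w, ⟨hw, h⟩, le_rfl⟩

theorem exists_decomp {K : Type*} [Field K] {n m : ℕ}
    (I : Ideal (MvPolynomial (Fin n) K)) (hI : IsMonomialIdeal I)
    (hGen : (minimalGenerators I).ncard = m) (hOdd : Odd m) :
    ∃ (ι : Type) (_ : Fintype ι) (_ : Nonempty ι) (u : ι → (Fin n →₀ ℕ))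
      (Z : ι → Finset (Fin n)), IsStanleyDecompOfIdeal I u Z ∧ ∀ i, n - m / 2 ≤ (Z i).card := by
  classical
  have hm : m ≠ 0 := by rintro rfl; simp at hOdd
  have : NeZero m := ⟨hm⟩
  have hfin : (minimalGenerators I).Finite := Set.finite_of_ncard_ne_zero (by rw [hGen]; exact hm)
  have := hfin.fintype
  have hc : Fintype.card (ZMod m) = Fintype.card (minimalGenerators I) := by
    rw [ZMod.card, ← hGen, ← Nat.card_coe_set_eq, Nat.card_eq_fintype_card]
  let e := Fintype.equivOfCardEq hc
  obtain ⟨T, h1, h2, h3⟩ := Dec.of_gens hOdd (fun i => ((e i : minimalGenerators I) : Fin n →₀ ℕ))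
  have hmem : ∀ w, (∃ t ∈ T, w ∈ stSet t.1 t.2) ↔ monomial w (1 : K) ∈ I := by
    intro w
    rw [← h3, ← exists_minimalGenerator_le]
    simp only [Set.mem_ofPred_eq]
    constructor
    · rintro ⟨i, hi⟩; exact ⟨_, (e i).2, hi⟩
    · rintro ⟨a, ha, haw⟩
      exact ⟨e.symm ⟨a, ha⟩, by simpa using haw⟩
  refine ⟨T, inferInstance, ?_, fun t => t.1.1, fun t => t.1.2, ?_, ?_⟩
  · have ha := (e 0).2.1
    obtain ⟨t, ht, _⟩ := (hmem _).2 ha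
    exact ⟨⟨t, ht⟩⟩
  · rw [isStanleyDecomp_iff hI]
    refine ⟨fun i j w hi hj => Subtype.ext (h2 _ i.2 _ j.2 w hi hj), fun w => ?_⟩
    rw [← hmem]
    constructor
    · rintro ⟨i, hi⟩; exact ⟨_, i.2, hi⟩
    · rintro ⟨t, ht, hw⟩; exact ⟨⟨t, ht⟩, hw⟩
  · rintro ⟨t, ht⟩
    simpa using h1 t ht

/-! ### Upper bound -/

theorem card_le_of_socle {K : Type*} [Field K] {n : ℕ}
    {I : Ideal (MvPolynomial (Fin n) K)} (hI : IsMonomialIdeal I)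
    (v : Fin n →₀ ℕ) (hv : monomial v (1 : K) ∉ I) (H : Finset (Fin n))
    (hH : ∀ i ∈ H, monomial (v + Finsupp.single i 1) (1 : K) ∈ I)
    {ι : Type} [Fintype ι] [Nonempty ι] (u : ι → (Fin n →₀ ℕ)) (Z : ι → Finset (Fin n))
    (hD : IsStanleyDecompOfIdeal I u Z) (d : ℕ) (hd : ∀ i, d ≤ (Z i).card) :
    d + H.card / 2 ≤ n := by
  classical
  rw [isStanleyDecomp_iff hI] at hD
  obtain ⟨hdis, hmem⟩ := hD
  have hdn : d ≤ n := by
    obtain ⟨i⟩ := ‹Nonempty ι›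
    exact (hd i).trans (by simpa using Finset.card_le_univ (Z i))
  rcases H.eq_empty_or_nonempty with rfl | hHne
  · simpa using hdn
  have hex : ∀ i, ∃ t, i ∈ H → v + Finsupp.single i 1 ∈ stSet (u t) (Z t) := by
    intro i
    by_cases hi : i ∈ H
    · obtain ⟨t, ht⟩ := (hmem _).2 (hH i hi)
      exact ⟨t, fun _ => ht⟩
    · exact ⟨Classical.arbitrary ι, fun h => absurd h hi⟩
  choose t ht using hex
  -- the exponent of `x_i` in `u (t i)` is exactly `v i + 1`
  have hui : ∀ i ∈ H, u (t i) i = v i + 1 := by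
    intro i hi
    obtain ⟨h1, h2⟩ := ht i hi
    by_contra hne
    have hle := h1 i
    simp only [Finsupp.add_apply, Finsupp.single_eq_same] at hle
    have hiZ : i ∈ Z (t i) := by
      by_contra hiZ
      have := h2 i hiZ
      simp only [Finsupp.add_apply, Finsupp.single_eq_same] at this
      omega
    apply hv
    rw [← hmem]
    refine ⟨t i, fun j => ?_, fun j hj => ?_⟩
    · by_cases hji : j = i
      · subst hji; omega
      · simpa [Finsupp.single_apply, Ne.symm hji] using h1 j
    · have hji : j ≠ i := by rintro rfl; exact hj hiZ
      simpa [Finsupp.single_apply, hji.symm] using h2 j hj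
  have hstep : ∀ i ∈ H, ∀ j, j ∈ Z (t i) →
      v + Finsupp.single i 1 + Finsupp.single j 1 ∈ stSet (u (t i)) (Z (t i)) := by
    intro i hi j hj
    obtain ⟨h1, h2⟩ := ht i hi
    refine ⟨h1.trans le_self_add, fun l hl => ?_⟩
    have hlj : l ≠ j := by rintro rfl; exact hl hj
    rw [Finsupp.add_apply, h2 l hl]
    simp [Finsupp.single_apply, hlj.symm]
  have hanti : ∀ i ∈ H, ∀ j ∈ H, i ≠ j → j ∈ Z (t i) → i ∉ Z (t j) := by
    intro i hi j hj hij hji hij'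
    have h1 := hstep i hi j hji
    have h2 := hstep j hj i hij'
    rw [add_right_comm] at h2
    have h3 := hdis _ _ _ h1 h2
    have h4 := (ht i hi).1 j
    rw [h3, hui j hj] at h4
    simp [Finsupp.single_apply, hij] at h4
  -- counting
  have hcount : ∑ i ∈ H, ((H.filter (fun j => j ≠ i ∧ j ∈ Z (t i))).card) ≤
      ∑ i ∈ H, ((H.filter (fun j => j ≠ i ∧ j ∉ Z (t i))).card) := by
    calc ∑ i ∈ H, ((H.filter (fun j => j ≠ i ∧ j ∈ Z (t i))).card)
        ≤ ∑ i ∈ H, ((H.filter (fun j => j ≠ i ∧ i ∉ Z (t j))).card) := by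
          refine Finset.sum_le_sum fun i hi => Finset.card_le_card fun j hj => ?_
          simp only [Finset.mem_filter] at hj ⊢
          exact ⟨hj.1, hj.2.1, hanti i hi j hj.1 hj.2.1.symm hj.2.2⟩
      _ = ∑ i ∈ H, ((H.filter (fun j => j ≠ i ∧ j ∉ Z (t i))).card) := by
          simp only [Finset.card_filter]
          rw [Finset.sum_comm]
          refine Finset.sum_congr rfl fun i _ => Finset.sum_congr rfl fun j _ => ?_
          simp only [ne_comm]
  obtain ⟨i, hi, hile⟩ := Finset.exists_le_of_sum_le hHne hcount
  have hsum : (H.filter (fun j => j ≠ i ∧ j ∈ Z (t i))).card +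
      (H.filter (fun j => j ≠ i ∧ j ∉ Z (t i))).card + 1 = H.card := by
    have h1 : (H.erase i).card + 1 = H.card := Finset.card_erase_add_one hi
    have h2 := Finset.card_filter_add_card_filter_not (s := H.erase i) (fun j => j ∈ Z (t i))
    rw [← h1, ← h2]
    congr 2 <;> congr 1 <;> ext j <;> simp [and_comm, and_assoc, and_left_comm]
  have hle : (H.filter (fun j => j ≠ i ∧ j ∉ Z (t i))).card + (Z (t i)).card ≤ n := by
    rw [← Finset.card_union_of_disjoint]
    · simpa using Finset.card_le_univ (H.filter (fun j => j ≠ i ∧ j ∉ Z (t i)) ∪ Z (t i))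
    · rw [Finset.disjoint_left]
      intro j hj
      simp only [Finset.mem_filter] at hj
      exact hj.2.2
  have := hd (t i)
  omega

/-! ### Associated primes of monomial ideals -/

theorem exists_socle {K : Type*} [Field K] {n : ℕ}
    {I : Ideal (MvPolynomial (Fin n) K)} (hI : IsMonomialIdeal I)
    (P : Ideal (MvPolynomial (Fin n) K))
    (hP : P ∈ associatedPrimes (MvPolynomial (Fin n) K) ((MvPolynomial (Fin n) K) ⧸ I)) :
    ∃ (v : Fin n →₀ ℕ) (H : Finset (Fin n)), monomial v (1 : K) ∉ I ∧
      (∀ i ∈ H, monomial (v + Finsupp.single i 1) (1 : K) ∈ I) ∧ P.height ≤ H.card := by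
  classical
  rw [AssociatedPrimes.mem_iff, isAssociatedPrime_iff] at hP
  obtain ⟨hPp, x, hx⟩ := hP
  obtain ⟨f₀, rfl⟩ := Ideal.Quotient.mk_surjective x
  have hf₀ : ∀ g, g ∈ P ↔ g * f₀ ∈ I := by
    intro g
    rw [hx, Submodule.mem_colon_singleton, Submodule.mem_bot, ← Ideal.Quotient.eq_zero_iff_mem]
    rfl
  -- choose `f` with the least number of terms outside `I`
  let c : MvPolynomial (Fin n) K → ℕ := fun f =>
    (f.support.filter (fun a => monomial a (1 : K) ∉ I)).card
  have hexN : ∃ N, ∃ f, (∀ g, g ∈ P ↔ g * f ∈ I) ∧ c f = N := ⟨_, f₀, hf₀, rfl⟩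
  obtain ⟨f₁, hf₁, hc₁⟩ := Nat.find_spec hexN
  have hmin : ∀ f, (∀ g, g ∈ P ↔ g * f ∈ I) → c f₁ ≤ c f := by
    intro f hf
    rw [hc₁]
    exact Nat.find_min' hexN ⟨f, hf, rfl⟩
  -- drop the terms in `I`
  obtain ⟨f, hfsup⟩ : ∃ f : MvPolynomial (Fin n) K,
      ∀ a, f.coeff a = if monomial a (1 : K) ∈ I then 0 else f₁.coeff a := by
    refine ⟨∑ a ∈ f₁.support.filter (fun a => monomial a (1 : K) ∉ I),
      monomial a (f₁.coeff a), fun a => ?_⟩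
    rw [coeff_sum]
    simp only [coeff_monomial, Finset.sum_ite_eq', Finset.mem_filter, mem_support_iff]
    by_cases h1 : monomial a (1 : K) ∈ I <;> by_cases h2 : f₁.coeff a = 0 <;> simp [h1, h2]
  have hfI : ∀ a ∈ f.support, monomial a (1 : K) ∉ I := by
    intro a ha hI'
    rw [mem_support_iff, hfsup, if_pos hI'] at ha
    exact ha rfl
  have hsub : f₁ - f ∈ I := by
    rw [mem_iff_of_monomial hI]
    intro a ha
    by_contra h
    rw [mem_support_iff, coeff_sub, hfsup, if_neg h, sub_self] at ha
    exact ha rfl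
  have hf : ∀ g, g ∈ P ↔ g * f ∈ I := by
    intro g
    rw [hf₁]
    have h1 : g * f₁ - g * f ∈ I := by rw [← mul_sub]; exact I.mul_mem_left _ hsub
    exact ⟨fun h => by simpa using I.sub_mem h h1, fun h => by simpa using I.add_mem h1 h⟩
  have hcf : c f₁ = f.support.card := by
    have : f.support = f₁.support.filter (fun a => monomial a (1 : K) ∉ I) := by
      ext a
      simp only [mem_support_iff, hfsup, Finset.mem_filter]
      by_cases h1 : monomial a (1 : K) ∈ I <;> simp [h1]
    rw [this]
  have hfne : f ≠ 0 := by
    rintro rfl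
    apply hPp.ne_top
    rw [Ideal.eq_top_iff_one, hf]
    simp
  let o : MonomialOrder (Fin n) := MonomialOrder.lex
  -- leading monomials of elements of `P` are in `P`
  have hlead : ∀ g ∈ P, g ≠ 0 → monomial (o.degree g) (1 : K) ∈ P := by
    intro g hg hg0
    by_contra hb
    set b := o.degree g with hbdef
    set a := o.degree f with hadef
    have hab : monomial (b + a) (1 : K) ∈ I := by
      have h1 := (mem_iff_of_monomial hI _).1 ((hf g).1 hg)
      apply h1
      rw [mem_support_iff, MonomialOrder.coeff_mul_of_degree_add]
      exact mul_ne_zero (by simpa using hg0) (by simpa using hfne)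
    have ha : a ∈ f.support := by
      rw [mem_support_iff]
      exact MonomialOrder.coeff_degree_ne_zero_iff.mpr hfne
    have h2 : ∀ g, g ∈ P ↔ g * (monomial b (1 : K) * f) ∈ I := by
      intro g
      rw [← mul_assoc, ← hf]
      exact ⟨fun h => P.mul_mem_right _ h, fun h => (hPp.mem_or_mem h).resolve_right hb⟩
    have h3 := hmin _ h2
    rw [hcf] at h3
    have h4 : c (monomial b (1 : K) * f) ≤ (f.support.erase a).card := by
      have : ((monomial b (1 : K) * f).support.filter (fun a => monomial a (1 : K) ∉ I)) ⊆
          (f.support.erase a).image (fun a => b + a) := by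
        intro w hw
        rw [Finset.mem_filter, mem_support_iff, coeff_monomial_mul'] at hw
        obtain ⟨hw1, hw2⟩ := hw
        split_ifs at hw1 with hbw
        · rw [Finset.mem_image]
          refine ⟨w - b, ?_, add_tsub_cancel_of_le hbw⟩
          rw [Finset.mem_erase, mem_support_iff]
          refine ⟨?_, by simpa using hw1⟩
          intro h
          rw [← h, add_tsub_cancel_of_le hbw] at hab
          exact hw2 hab
        · exact absurd rfl hw1
      exact (Finset.card_le_card this).trans Finset.card_image_le
    have h5 := Finset.card_erase_lt_of_mem ha
    omega
  have hall : ∀ N, ∀ g ∈ P, g.support.card ≤ N → ∀ b ∈ g.support, monomial b (1 : K) ∈ P := by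
    intro N
    induction N with
    | zero =>
      intro g _ hN b hb
      have : g.support = ∅ := by simpa using hN
      simp [this] at hb
    | succ N ih =>
      intro g hg hN b hb
      have hg0 : g ≠ 0 := by rintro rfl; simp at hb
      have hl := hlead g hg hg0
      by_cases hbd : b = o.degree g
      · rw [hbd]; exact hl
      have hd : o.degree g ∈ g.support := by
        rw [mem_support_iff]
        exact MonomialOrder.coeff_degree_ne_zero_iff.mpr hg0
      have hg' : g - C (g.coeff (o.degree g)) * monomial (o.degree g) (1 : K) ∈ P :=
        P.sub_mem hg (P.mul_mem_left _ hl)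
      have hs : (g - C (g.coeff (o.degree g)) * monomial (o.degree g) (1 : K)).support =
          g.support.erase (o.degree g) := by
        ext w
        rw [mem_support_iff, C_mul_monomial, coeff_sub, coeff_monomial, Finset.mem_erase,
          mem_support_iff]
        by_cases hw : o.degree g = w
        · simp [hw]
        · simp [hw, Ne.symm hw]
      refine ih _ hg' ?_ b ?_
      · rw [hs, Finset.card_erase_of_mem hd]; omega
      · rw [hs]; exact Finset.mem_erase.mpr ⟨hbd, hb⟩
  let H : Finset (Fin n) := Finset.univ.filter (fun i => (X i : MvPolynomial (Fin n) K) ∈ P)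
  have hspan : P = Ideal.span ((X : Fin n → MvPolynomial (Fin n) K) '' (H : Set (Fin n))) := by
    apply le_antisymm
    · intro g hg
      rw [mem_ideal_span_X_image]
      intro b hb
      have h1 := hall _ g hg le_rfl b hb
      rw [monomial_eq, C_1, one_mul, Finsupp.prod, hPp.prod_mem_iff] at h1
      obtain ⟨i, hi, hiP⟩ := h1
      exact ⟨i, by simpa [H] using hPp.mem_of_pow_mem _ hiP, by simpa using hi⟩
    · rw [Ideal.span_le]
      rintro _ ⟨i, hi, rfl⟩
      simpa [H] using hi
  obtain ⟨v, hv⟩ : f.support.Nonempty := by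
    rw [Finset.nonempty_iff_ne_empty]; simpa using hfne
  refine ⟨v, H, hfI v hv, fun i hi => ?_, ?_⟩
  · have h1 : X i * f ∈ I := (hf _).1 (by simpa [H] using hi)
    refine (mem_iff_of_monomial hI _).1 h1 _ ?_
    rw [mem_support_iff, add_comm, coeff_X_mul]
    simpa using hv
  · have h1 : P ∈ (Ideal.span ((H.image (X : Fin n → MvPolynomial (Fin n) K) :
        Finset (MvPolynomial (Fin n) K)) : Set (MvPolynomial (Fin n) K))).minimalPrimes := by
      rw [Finset.coe_image, ← hspan, Ideal.minimalPrimes_eq_subsingleton_self]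
      rfl
    refine (Ideal.height_le_card_of_mem_minimalPrimes_span_finset h1).trans ?_
    exact_mod_cast Finset.card_image_le

/-- If `|G(I)| = m` is odd and some associated prime of `S/I` has height `≥ m - 1`, then
`sdepth I = n - ⌊m/2⌋`. -/
theorem sdepth_eq_of_height_ge_card_gens_odd {K : Type*} [Field K] {n m : ℕ}
    (I : Ideal (MvPolynomial (Fin n) K)) (hI : IsMonomialIdeal I)
    (hGen : (minimalGenerators I).ncard = m) (hOdd : Odd m)
    (P : Ideal (MvPolynomial (Fin n) K))
    (hP : P ∈ associatedPrimes (MvPolynomial (Fin n) K) ((MvPolynomial (Fin n) K) ⧸ I))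
    (hht : ∀ h : P.IsPrime, ((m - 1 : ℕ) : ℕ∞) ≤ primeHt P h) :
    sdepthIdeal I = n - m / 2 := by
  obtain ⟨v, H, hv, hH, hle⟩ := exists_socle hI P hP
  have hPp : P.IsPrime := hP.1
  have h1 := hht hPp
  have h2 : primeHt P hPp = P.height :=
    (PrimeSpectrum.height_eq_orderHeight (⟨P, hPp⟩ : PrimeSpectrum _)).symm
  rw [h2] at h1
  have h3 : m - 1 ≤ H.card := by exact_mod_cast h1.trans hle
  unfold sdepthIdeal
  refine IsGreatest.csSup_eq ⟨exists_decomp I hI hGen hOdd, ?_⟩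
  rintro d ⟨ι, _, _, u, Z, hD, hd⟩
  have h4 := card_le_of_socle hI v hv H hH u Z hD d hd
  obtain ⟨k, rfl⟩ := hOdd
  omega
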